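/- Let T : ℝ[x] → ℝ[x] be a linear operator, let (B_n)_{n≥0} and (B̃_n)_{n≥0} be simple bases, and let (a_n)_{n≥0} be a sequence of real numbers such that T(B_n) = a_n · B_n and T(B̃_n) = a_n · B̃_n for every n ∈ ℕ. Fix m ∈ ℕ and suppose a_m ≠ a_k for all 0 ≤ k < m. Then there exists β ∈ ℝ, β ≠ 0, such that B_m = β · B̃_m. -/

import Mathlib

/-!
An operator diagonalized by a simple basis `B` preserves each space of polynomials of degree
`< n` (`degree_map_lt`) and acts on leading terms of degree `n` as multiplication by the
eigenvalue `a n` (`coeff_map`). Choose `β` so that `B m - β • B' m` has degree `< m`. This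
difference is still an eigenvector for `a m`; were it nonzero of degree `k < m`, comparing
coefficients of degree `k` would give `a m = a k`. Hence it vanishes, and `β ≠ 0` because
`B m ≠ 0`.
-/

open Polynomial

lemma exists_degree_sub_smul_lt {n : ℕ} {b p : ℝ[X]} (hb : b.degree = n)
    (hp : p.degree < (n + 1 : ℕ)) : ∃ c : ℝ, (p - c • b).degree < n := by
  have hb0 : b.coeff n ≠ 0 := coeff_ne_zero_of_eq_degree hb
  refine ⟨p.coeff n / b.coeff n, (degree_lt_iff_coeff_zero _ _).2 fun k hk => ?_⟩
  rcases hk.eq_or_lt with rfl | hk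
  · simp [hb0]
  · have h1 : p.coeff k = 0 := (degree_lt_iff_coeff_zero _ _).1 hp k hk
    have h2 : b.coeff k = 0 := coeff_eq_zero_of_degree_lt (by rw [hb]; exact_mod_cast hk)
    simp [h1, h2]

lemma degree_map_lt {T : ℝ[X] →ₗ[ℝ] ℝ[X]} {B : ℕ → ℝ[X]} {a : ℕ → ℝ}
    (hB : ∀ n : ℕ, (B n).degree = n) (hT : ∀ n : ℕ, T (B n) = a n • B n) (n : ℕ) :
    ∀ p : ℝ[X], p.degree < n → (T p).degree < n := by
  induction n with
  | zero =>
    intro p hp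
    have hp0 : p = 0 := by
      ext k
      simpa using (degree_lt_iff_coeff_zero _ _).1 hp k (Nat.zero_le k)
    simp [hp0]
  | succ n ih =>
    intro p hp
    obtain ⟨c, hc⟩ := exists_degree_sub_smul_lt (hB n) hp
    have hlt : (n : WithBot ℕ) < (n + 1 : ℕ) := by exact_mod_cast Nat.lt_succ_self n
    have hTp : T p = T (p - c • B n) + (c * a n) • B n := by
      simp [hT, smul_smul]
    rw [hTp]
    refine (degree_add_le _ _).trans_lt (max_lt ((ih _ hc).trans hlt) ?_)
    exact (degree_smul_le _ _).trans_lt ((hB n).trans_lt hlt)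

lemma coeff_map {T : ℝ[X] →ₗ[ℝ] ℝ[X]} {B : ℕ → ℝ[X]} {a : ℕ → ℝ}
    (hB : ∀ n : ℕ, (B n).degree = n) (hT : ∀ n : ℕ, T (B n) = a n • B n) {n : ℕ}
    {p : ℝ[X]} (hp : p.degree < (n + 1 : ℕ)) : (T p).coeff n = a n * p.coeff n := by
  obtain ⟨c, hc⟩ := exists_degree_sub_smul_lt (hB n) hp
  have h1 := coeff_eq_zero_of_degree_lt hc
  have h2 := coeff_eq_zero_of_degree_lt (degree_map_lt hB hT n _ hc)
  simp only [map_sub, map_smul, hT, coeff_sub, coeff_smul, smul_eq_mul] at h1 h2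
  linear_combination h2 - a n * h1

/-- If two simple bases diagonalize the same operator with the same eigenvalues, and
`a m ≠ a k` for all `k < m`, then `B m` is a nonzero multiple of `B' m`. -/
theorem stmt_16 (T : Polynomial ℝ →ₗ[ℝ] Polynomial ℝ)
    (B B' : ℕ → Polynomial ℝ)
    (hB : ∀ n : ℕ, (B n).degree = n) (hB' : ∀ n : ℕ, (B' n).degree = n)
    (a : ℕ → ℝ)
    (hT : ∀ n : ℕ, T (B n) = a n • B n) (hT' : ∀ n : ℕ, T (B' n) = a n • B' n)
    (m : ℕ) (hm : ∀ k : ℕ, k < m → a m ≠ a k) :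
    ∃ β : ℝ, β ≠ 0 ∧ B m = β • B' m := by
  have hlt : (m : WithBot ℕ) < (m + 1 : ℕ) := by exact_mod_cast Nat.lt_succ_self m
  obtain ⟨β, hβ⟩ := exists_degree_sub_smul_lt (hB' m) ((hB m).trans_lt hlt)
  have hTp : T (B m - β • B' m) = a m • (B m - β • B' m) := by
    simp [hT, hT', smul_sub, smul_comm β]
  have hzero : B m - β • B' m = 0 := by
    by_contra hne
    generalize B m - β • B' m = p at hβ hTp hne
    have hk : p.natDegree < m := (natDegree_lt_iff_degree_lt hne).2 hβ
    have hp : p.degree < (p.natDegree + 1 : ℕ) :=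
      (natDegree_lt_iff_degree_lt hne).1 (Nat.lt_succ_self _)
    have hc := coeff_map hB hT hp
    rw [hTp, coeff_smul, smul_eq_mul] at hc
    exact hm _ hk (mul_right_cancel₀ (leadingCoeff_ne_zero.2 hne) hc)
  have hEq : B m = β • B' m := sub_eq_zero.1 hzero
  refine ⟨β, ?_, hEq⟩
  rintro rfl
  have hdeg := hB m
  rw [hEq] at hdeg
  simp at hdeg
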